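/- arXiv:1310.6056 — 2 statements merged into one kernel-verified Lean document; each statement's English description precedes it below -/
import Mathlib

section
/- For every positive integer n, the number of quadruples (x₁, x₂, x₃, x₄) ∈ ℤ⁴ with x₁² + x₂² + x₃² + x₄² = n, x₁ ≡ 1 (mod 2), and x₂ ≡ x₃ ≡ x₄ ≡ 0 (mod 2) equals (1 + χ₋₄(n)) σ(n) − 3σ(n/2) + 2σ(n/4). -/
open Finset

/-- The Kronecker symbol `(-4/d)` for positive `d`. -/
def chiM4 (d : ℕ) : ℤ := if d % 4 = 1 then 1 else if d % 4 = 3 then -1 else 0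

/-- `sigmaDiv n k = σ(n/k) = ∑_{d ∣ n/k} d`, interpreted as `0` when `k` does not divide `n`. -/
def sigmaDiv (n k : ℕ) : ℤ := if k ∣ n then ∑ d ∈ (n / k).divisors, (d : ℤ) else 0

/-!
For `n ≡ 1 mod 4`, a quarter of a Hadamard transform identifies the quadruples with
`x₀ + x₁ + x₂ + x₃ ≡ 1 mod 4` with the representations of `(n - 1) / 2` as a sum of four triangular
numbers; negation exchanges these quadruples with the remaining ones. Legendre's count `σ(2k + 1)`
of the representations of `k` as a sum of four triangular numbers holds because `F = ψ ^ 4` and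
`F = ∑ σ(2k + 1) q ^ k`, where `ψ = ∑ q ^ T` over the triangular numbers `T`, both
satisfy `ψ F' = 4 ψ' F`; for the second series this is a Liouville-type identity over the solutions
of `x ^ 2 + 4 * d * e = 8 * k + 5`, proved by an involution. If `n ≢ 1 mod 4` there are no
quadruples, and the right-hand side vanishes: for odd `n` because `χ₋₄(n) = -1`, and for even `n` by
the Hecke relation of `σ` at `2`.
-/

section PowerSeries

open PowerSeries

theorem coeff_X_mul_derivative {R : Type*} [CommSemiring R] (f : R⟦X⟧) (k : ℕ) :
    coeff k (X * d⁄dX R f) = k * coeff k f := by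
  cases k with
  | zero => simp
  | succ k => rw [coeff_succ_X_mul, coeff_derivative, Nat.cast_succ, mul_comm]

theorem eq_pow_of_mul_derivative_eq {R : Type*} [CommRing R] [IsAddTorsionFree R]
    {f g : R⟦X⟧} {m : ℕ} (hf : IsUnit f) (hconst : constantCoeff g = constantCoeff f ^ m)
    (hderiv : f * d⁄dX R g = m * d⁄dX R f * g) : g = f ^ m := by
  obtain ⟨u, hu⟩ := hf.exists_right_inv
  have hderiv_pow : d⁄dX R (u ^ m) = -m * u ^ (m + 1) * d⁄dX R f := by
    rw [derivative_pow, (d⁄dX R).leibniz_of_mul_eq_one (by rwa [mul_comm])]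
    cases m with
    | zero => simp
    | succ m => simp only [Nat.add_sub_cancel, smul_eq_mul]; ring
  have hquot : g * u ^ m = 1 := by
    refine derivative.ext ?_ ?_
    · simp only [derivative_one, Derivation.leibniz, hderiv_pow, smul_eq_mul]
      linear_combination u ^ (m + 1) * hderiv - u ^ m * d⁄dX R g * hu
    · rw [map_mul, hconst, ← map_pow, ← map_mul, ← mul_pow, hu, one_pow]
  rw [← mul_one g, ← one_pow m, ← hu, mul_pow, mul_left_comm, hquot, mul_one]

/-- Miller's recurrence for the coefficients of a power. -/
theorem eq_pow_of_sum_antidiagonal_eq_zero {R : Type*} [CommRing R] [IsAddTorsionFree R]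
    {f g : R⟦X⟧} {m : ℕ} (hf : IsUnit f) (hconst : constantCoeff g = constantCoeff f ^ m)
    (hrec : ∀ k : ℕ, ∑ p ∈ antidiagonal k, (p.2 - m * p.1 : R) * (coeff p.1 f * coeff p.2 g) = 0) :
    g = f ^ m := by
  refine eq_pow_of_mul_derivative_eq hf hconst (X_mul_cancel ?_)
  suffices f * (X * d⁄dX R g) - m • ((X * d⁄dX R f) * g) = 0 by
    rw [nsmul_eq_mul] at this
    linear_combination this
  ext k
  rw [map_sub, map_nsmul, coeff_mul, coeff_mul, smul_sum, ← sum_sub_distrib, map_zero, ← hrec k]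
  refine sum_congr rfl fun p _ => ?_
  simp only [coeff_X_mul_derivative, nsmul_eq_mul]
  ring

variable {R : Type*} [CommSemiring R]

variable (R) in
open Classical in
/-- The power series `∑ X ^ w a` whose exponents run over the values of an injective `w`. -/
noncomputable def rangeSeries {α : Type*} (w : α → ℕ) : R⟦X⟧ :=
  PowerSeries.mk fun k => if k ∈ Set.range w then 1 else 0

theorem coeff_rangeSeries_pow {α : Type*} {w : α → ℕ} (hw : w.Injective) (m k : ℕ) :
    coeff k (rangeSeries R w ^ m) = ({v : Fin m → α | ∑ i, w (v i) = k}.ncard : R) := by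
  classical
  have hinj : (fun v : Fin m → α => Finsupp.equivFunOnFinite.symm (w ∘ v)).Injective :=
    Finsupp.equivFunOnFinite.symm.injective.comp hw.comp_left
  have himage : (fun v => Finsupp.equivFunOnFinite.symm (w ∘ v)) ''
      {v : Fin m → α | ∑ i, w (v i) = k} =
      ((finsuppAntidiag univ k).filter fun l : Fin m →₀ ℕ => ∀ i, l i ∈ Set.range w) := by
    ext l
    simp only [Set.mem_image, Set.mem_ofPred_eq, coe_filter, mem_finsuppAntidiag, subset_univ,
      and_true]
    constructor
    · rintro ⟨v, hv, rfl⟩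
      exact ⟨hv, fun i => Set.mem_range_self _⟩
    · rintro ⟨hl, hmem⟩
      choose v hv using hmem
      exact ⟨v, by simpa only [hv] using hl, Finsupp.ext hv⟩
  rw [← Set.ncard_image_of_injective _ hinj, himage, Set.ncard_coe_finset, ← Fin.prod_const,
    coeff_prod]
  simp only [rangeSeries, coeff_mk, prod_boole, mem_univ, true_imp_iff, sum_boole]

end PowerSeries

/-- The `a`-th triangular number in the enumeration by all integers: `8 * triangular a + 1` is the
square of `4 * a + 1`, so that each triangular number occurs exactly once. -/
def triangular (a : ℤ) : ℕ := (a * (2 * a + 1)).natAbs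

theorem coe_triangular (a : ℤ) : (triangular a : ℤ) = a * (2 * a + 1) := by
  rw [triangular, Int.natCast_natAbs, abs_of_nonneg]
  rcases le_or_gt 0 a with ha | ha <;> nlinarith

theorem triangular_injective : triangular.Injective := by
  intro a b hab
  have h : (a - b) * (2 * (a + b) + 1) = 0 := by
    have := congrArg (Nat.cast (R := ℤ)) hab
    rw [coe_triangular, coe_triangular] at this
    linear_combination this
  rcases mul_eq_zero.mp h with h | h <;> lia

/-- The solutions `(x, d, e)` of `x ^ 2 + 4 * d * e = N` with `x ≡ 1 mod 4` and `d`, `e` odd and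
positive. -/
noncomputable def quadraticTriples (N : ℤ) : Finset (ℤ × ℤ × ℤ) :=
  (Icc (-N) N ×ˢ Icc 1 N ×ˢ Icc 1 N).filter fun (x, d, e) =>
    x % 4 = 1 ∧ d % 2 = 1 ∧ e % 2 = 1 ∧ x ^ 2 + 4 * (d * e) = N

theorem mem_quadraticTriples {N x d e : ℤ} :
    (x, d, e) ∈ quadraticTriples N ↔
      0 < d ∧ 0 < e ∧ x % 4 = 1 ∧ d % 2 = 1 ∧ e % 2 = 1 ∧ x ^ 2 + 4 * (d * e) = N := by
  simp only [quadraticTriples, mem_filter, mem_product, mem_Icc]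
  constructor
  · rintro ⟨⟨-, ⟨hd, -⟩, he, -⟩, h⟩
    exact ⟨hd, he, h⟩
  · rintro ⟨hd, he, h⟩
    refine ⟨⟨⟨?_, ?_⟩, ⟨hd, ?_⟩, he, ?_⟩, h⟩ <;> nlinarith [h.2.2.2, mul_pos hd he, sq_nonneg x]

/-- The involution that pairs off the triples whose weights `(d + e) * (d + x) * (e - x)` cancel. -/
def tripleFlip : ℤ × ℤ × ℤ → ℤ × ℤ × ℤ := fun (x, d, e) =>
  if d + x < e then (-x - 2 * d, d, e - x - d) else (2 * e - x, d + x - e, e)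

theorem tripleFlip_of_lt {x d e : ℤ} (h : d + x < e) :
    tripleFlip (x, d, e) = (-x - 2 * d, d, e - x - d) := if_pos h

theorem tripleFlip_of_le {x d e : ℤ} (h : e ≤ d + x) :
    tripleFlip (x, d, e) = (2 * e - x, d + x - e, e) := if_neg h.not_gt

theorem tripleFlip_mem {N : ℤ} {t : ℤ × ℤ × ℤ} (ht : t ∈ quadraticTriples N) :
    tripleFlip t ∈ quadraticTriples N := by
  obtain ⟨x, d, e⟩ := t
  obtain ⟨hd, he, hx, hd2, he2, rfl⟩ := mem_quadraticTriples.mp ht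
  rcases lt_or_ge (d + x) e with h | h
  · rw [tripleFlip_of_lt h, mem_quadraticTriples]
    exact ⟨hd, by lia, by lia, hd2, by lia, by ring⟩
  · rw [tripleFlip_of_le h, mem_quadraticTriples]
    exact ⟨by lia, he, by lia, by lia, he2, by ring⟩

theorem tripleFlip_tripleFlip {N : ℤ} {t : ℤ × ℤ × ℤ} (ht : t ∈ quadraticTriples N) :
    tripleFlip (tripleFlip t) = t := by
  obtain ⟨x, d, e⟩ := t
  obtain ⟨hd, he, -⟩ := mem_quadraticTriples.mp ht
  rcases lt_or_ge (d + x) e with h | h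
  · rw [tripleFlip_of_lt h, tripleFlip_of_lt (by lia)]
    ext <;> dsimp only <;> ring
  · rw [tripleFlip_of_le h, tripleFlip_of_le (by lia)]
    ext <;> dsimp only <;> ring

theorem sum_quadraticTriples_antisymm_weight (N : ℤ) :
    ∑ t ∈ quadraticTriples N, (t.2.1 + t.2.2) * (t.2.1 + t.1) * (t.2.2 - t.1) = 0 := by
  refine sum_involution (fun t _ => tripleFlip t) ?_ ?_ (fun _ => tripleFlip_mem)
    (fun _ => tripleFlip_tripleFlip)
  · rintro ⟨x, d, e⟩ -
    rcases lt_or_ge (d + x) e with h | h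
    · rw [tripleFlip_of_lt h]
      ring
    · rw [tripleFlip_of_le h]
      ring
  · rintro ⟨x, d, e⟩ - hweight hfix
    refine hweight ?_
    rcases lt_or_ge (d + x) e with h | h
    · rw [tripleFlip_of_lt h, Prod.mk.injEq] at hfix
      simp [show d + x = 0 by lia]
    · rw [tripleFlip_of_le h, Prod.mk.injEq] at hfix
      simp [show e - x = 0 by lia]

theorem sum_quadraticTriples_comp_swap (N : ℤ) (f : ℤ × ℤ × ℤ → ℤ) :
    ∑ t ∈ quadraticTriples N, f (t.1, t.2.swap) = ∑ t ∈ quadraticTriples N, f t := by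
  have hmem : ∀ t ∈ quadraticTriples N, (t.1, t.2.swap) ∈ quadraticTriples N := by
    rintro ⟨x, d, e⟩ h
    obtain ⟨hd, he, hx, hd2, he2, rfl⟩ := mem_quadraticTriples.mp h
    exact mem_quadraticTriples.mpr ⟨he, hd, hx, he2, hd2, by ring⟩
  exact sum_nbij' (fun t => (t.1, t.2.swap)) (fun t => (t.1, t.2.swap)) hmem hmem
    (fun _ _ => rfl) (fun _ _ => rfl) (fun _ _ => rfl)

theorem sum_quadraticTriples_eq_zero (N : ℤ) :
    ∑ t ∈ quadraticTriples N, t.2.1 * (t.2.1 * t.2.2 - t.1 ^ 2) = 0 := by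
  have hsymm := sum_quadraticTriples_comp_swap N fun t => t.2.1 * (t.2.1 * t.2.2 - t.1 ^ 2)
  have hanti : ∑ t ∈ quadraticTriples N, t.1 * (t.2.1 ^ 2 - t.2.2 ^ 2) = 0 := by
    have h := sum_quadraticTriples_comp_swap N fun t => t.1 * (t.2.1 ^ 2 - t.2.2 ^ 2)
    have hneg : ∑ t ∈ quadraticTriples N, t.1 * (t.2.2 ^ 2 - t.2.1 ^ 2) =
        -∑ t ∈ quadraticTriples N, t.1 * (t.2.1 ^ 2 - t.2.2 ^ 2) := by
      rw [← sum_neg_distrib]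
      exact sum_congr rfl fun t _ => by ring
    exact self_eq_neg.mp (h.symm.trans hneg)
  refine (mul_eq_zero_iff_left two_ne_zero).mp ?_
  calc 2 * ∑ t ∈ quadraticTriples N, t.2.1 * (t.2.1 * t.2.2 - t.1 ^ 2)
      = ∑ t ∈ quadraticTriples N, t.2.2 * (t.2.2 * t.2.1 - t.1 ^ 2) +
          ∑ t ∈ quadraticTriples N, t.2.1 * (t.2.1 * t.2.2 - t.1 ^ 2) -
          ∑ t ∈ quadraticTriples N, t.1 * (t.2.1 ^ 2 - t.2.2 ^ 2) := by
        rw [hanti, sub_zero, two_mul]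
        congr 1
        exact hsymm.symm
    _ = ∑ t ∈ quadraticTriples N, (t.2.1 + t.2.2) * (t.2.1 + t.1) * (t.2.2 - t.1) := by
        rw [← sum_add_distrib, ← sum_sub_distrib]
        exact sum_congr rfl fun t _ => by ring
    _ = 0 := sum_quadraticTriples_antisymm_weight N

theorem mem_quadraticTriples_iff_exists_triangular {k : ℕ} {t : ℤ × ℤ × ℤ} :
    t ∈ quadraticTriples (8 * k + 5) ↔ ∃ (a : ℤ) (j d e : ℕ),
      triangular a + j = k ∧ d * e = 2 * j + 1 ∧ t = (4 * a + 1, (d : ℤ), (e : ℤ)) := by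
  have hsq (a : ℤ) : (4 * a + 1) ^ 2 = 8 * (triangular a : ℤ) + 1 := by
    rw [coe_triangular]
    ring
  constructor
  · obtain ⟨x, d, e⟩ := t
    rw [mem_quadraticTriples]
    rintro ⟨hd, he, hx, -, -, h⟩
    obtain ⟨a, rfl⟩ : ∃ a, x = 4 * a + 1 := ⟨x / 4, by lia⟩
    lift d to ℕ using hd.le
    lift e to ℕ using he.le
    rw [hsq] at h
    exact ⟨a, k - triangular a, d, e, by lia, by lia, rfl⟩
  · rintro ⟨a, j, d, e, hk, hde, rfl⟩
    obtain ⟨hd, he⟩ : Odd d ∧ Odd e := Nat.odd_mul.mp ⟨j, hde⟩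
    have := hd.pos
    have := he.pos
    rw [mem_quadraticTriples, hsq]
    exact ⟨by lia, by lia, by lia, by grind, by grind, by lia⟩

open ArithmeticFunction Classical in
theorem sum_triangular_mul_sigma_eq_sum_quadraticTriples (k : ℕ) :
    ∑ p ∈ antidiagonal k with p.1 ∈ Set.range triangular,
        2 * ((p.2 : ℤ) - 4 * p.1) * sigma 1 (2 * p.2 + 1) =
      ∑ t ∈ quadraticTriples (8 * k + 5), t.2.1 * (t.2.1 * t.2.2 - t.1 ^ 2) := by
  have hsigma (p : ℕ × ℕ) : 2 * ((p.2 : ℤ) - 4 * p.1) * sigma 1 (2 * p.2 + 1) =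
      ∑ q ∈ (2 * p.2 + 1).divisorsAntidiagonal, 2 * ((p.2 : ℤ) - 4 * p.1) * q.1 := by
    rw [sigma_one_apply, ← Nat.sum_divisorsAntidiagonal fun d _ => d, Nat.cast_sum, mul_sum]
  rw [sum_congr rfl fun p _ => hsigma p, sum_sigma']
  set index : ℤ × ℤ × ℤ → (_ : ℕ × ℕ) × ℕ × ℕ := fun (x, d, e) =>
    ⟨(triangular (x / 4), (d * e / 2).toNat), (d.toNat, e.toNat)⟩ with hindex
  have index_apply {a : ℤ} {j d e : ℕ} (hde : d * e = 2 * j + 1) :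
      index (4 * a + 1, d, e) = ⟨(triangular a, j), (d, e)⟩ := by
    simp only [hindex, Int.toNat_natCast, show (4 * a + 1) / 4 = a by lia,
      show ((d : ℤ) * e / 2).toNat = j by lia]
  symm
  refine sum_nbij index ?_ ?_ ?_ ?_
  · intro t ht
    obtain ⟨a, j, d, e, hk, hde, rfl⟩ := mem_quadraticTriples_iff_exists_triangular.mp ht
    simp [index_apply hde, hk, hde]
  · intro t ht t' ht' heq
    obtain ⟨a, j, d, e, -, hde, rfl⟩ := mem_quadraticTriples_iff_exists_triangular.mp ht
    obtain ⟨a', j', d', e', -, hde', rfl⟩ := mem_quadraticTriples_iff_exists_triangular.mp ht'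
    simp only [index_apply hde, index_apply hde', Sigma.mk.injEq, Prod.mk.injEq, heq_eq_eq] at heq
    obtain ⟨⟨ha, -⟩, rfl, rfl⟩ := heq
    rw [triangular_injective ha]
  · rintro ⟨⟨i, j⟩, d, e⟩ h
    simp only [coe_sigma, Set.mem_sigma_iff, SetLike.mem_coe, mem_filter,
      HasAntidiagonal.mem_antidiagonal, Nat.mem_divisorsAntidiagonal] at h
    obtain ⟨⟨hk, a, rfl⟩, hde, -⟩ := h
    exact ⟨_, mem_quadraticTriples_iff_exists_triangular.mpr ⟨a, j, d, e, hk, hde, rfl⟩,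
      index_apply hde⟩
  · intro t ht
    obtain ⟨a, j, d, e, -, hde, rfl⟩ := mem_quadraticTriples_iff_exists_triangular.mp ht
    have : (d : ℤ) * e = 2 * j + 1 := by exact_mod_cast hde
    rw [index_apply hde, coe_triangular, this]
    ring

open ArithmeticFunction in
/-- Legendre's four triangular numbers theorem. -/
theorem ncard_sum_four_triangular (k : ℕ) :
    {v : Fin 4 → ℤ | ∑ i, triangular (v i) = k}.ncard = sigma 1 (2 * k + 1) := by
  classical
  have hconst : PowerSeries.constantCoeff (rangeSeries ℤ triangular) = 1 := by
    rw [← PowerSeries.coeff_zero_eq_constantCoeff_apply, rangeSeries, PowerSeries.coeff_mk,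
      if_pos ⟨0, rfl⟩]
  have hpow : PowerSeries.mk (fun k => (sigma 1 (2 * k + 1) : ℤ)) =
      rangeSeries ℤ triangular ^ 4 := by
    refine eq_pow_of_sum_antidiagonal_eq_zero
      (PowerSeries.isUnit_iff_constantCoeff.mpr (hconst ▸ isUnit_one)) ?_ fun k => ?_
    · simp [hconst, ← PowerSeries.coeff_zero_eq_constantCoeff_apply]
    · refine (mul_eq_zero_iff_left two_ne_zero).mp ?_
      rw [← sum_quadraticTriples_eq_zero (8 * k + 5),
        ← sum_triangular_mul_sigma_eq_sum_quadraticTriples, mul_sum, sum_filter]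
      refine sum_congr rfl fun p _ => ?_
      simp only [rangeSeries, PowerSeries.coeff_mk]
      split_ifs <;> push_cast <;> ring
  have hcoeff := coeff_rangeSeries_pow (R := ℤ) triangular_injective 4 k
  rw [← hpow, PowerSeries.coeff_mk] at hcoeff
  exact_mod_cast hcoeff.symm

/-- A quarter of the Hadamard transform of the vector `4 * v + 1`, which carries sums of four
triangular numbers to sums of four squares. -/
def hadamard (v : Fin 4 → ℤ) : Fin 4 → ℤ :=
  ![v 0 + v 1 + v 2 + v 3 + 1, v 0 + v 1 - v 2 - v 3, v 0 - v 1 + v 2 - v 3,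
    v 0 - v 1 - v 2 + v 3]

theorem hadamard_injective : hadamard.Injective := by
  intro v w h
  have h0 := congrFun h 0
  have h1 := congrFun h 1
  have h2 := congrFun h 2
  have h3 := congrFun h 3
  simp only [hadamard, Matrix.cons_val] at h0 h1 h2 h3
  ext i
  fin_cases i <;> dsimp only [Fin.zero_eta, Fin.mk_one, Fin.reduceFinMk] <;> lia

theorem exists_hadamard_eq {x : Fin 4 → ℤ} (hsum : (x 0 + x 1 + x 2 + x 3) % 4 = 1)
    (h1 : x 1 % 2 = 0) (h2 : x 2 % 2 = 0) (h3 : x 3 % 2 = 0) : ∃ v, hadamard v = x := by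
  refine ⟨![(x 0 + x 1 + x 2 + x 3) / 4, (x 0 + x 1 - x 2 - x 3) / 4,
    (x 0 - x 1 + x 2 - x 3) / 4, (x 0 - x 1 - x 2 + x 3) / 4], ?_⟩
  ext i
  fin_cases i <;>
    simp only [hadamard, Fin.zero_eta, Fin.mk_one, Fin.reduceFinMk, Matrix.cons_val] <;> lia

theorem hadamard_sq_sum (v : Fin 4 → ℤ) :
    hadamard v 0 ^ 2 + hadamard v 1 ^ 2 + hadamard v 2 ^ 2 + hadamard v 3 ^ 2 =
      2 * (∑ i, triangular (v i) : ℕ) + 1 := by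
  rw [Nat.cast_sum]
  simp only [coe_triangular, Fin.sum_univ_four, hadamard, Matrix.cons_val]
  ring

theorem even_sum_triangular_iff (v : Fin 4 → ℤ) :
    Even (∑ i, triangular (v i)) ↔ Even (v 0 + v 1 + v 2 + v 3) := by
  rw [← Int.even_coe_nat, Nat.cast_sum]
  simp only [coe_triangular, Fin.sum_univ_four]
  grind

/-- The representations of `n` as a sum of four squares, the first odd and the others even. -/
def firstOddReps (n : ℤ) : Set (Fin 4 → ℤ) :=
  {x | x 0 ^ 2 + x 1 ^ 2 + x 2 ^ 2 + x 3 ^ 2 = n ∧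
    x 0 % 2 = 1 ∧ x 1 % 2 = 0 ∧ x 2 % 2 = 0 ∧ x 3 % 2 = 0}

theorem firstOddReps_eq_empty {n : ℤ} (hn : n % 4 ≠ 1) : firstOddReps n = ∅ := by
  refine Set.eq_empty_of_forall_notMem ?_
  rintro x ⟨h, h0, h1, h2, h3⟩
  have hodd := Int.sq_mod_four_eq_one_of_odd (Int.odd_iff.mpr h0)
  have heven {z : ℤ} (hz : z % 2 = 0) : z ^ 2 % 4 = 0 :=
    Int.emod_eq_zero_of_dvd (pow_dvd_pow_of_dvd (Int.dvd_of_emod_eq_zero hz) 2)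
  have := heven h1
  have := heven h2
  have := heven h3
  lia

theorem neg_mem_firstOddReps {n : ℤ} {x : Fin 4 → ℤ} (hx : x ∈ firstOddReps n) :
    -x ∈ firstOddReps n := by
  obtain ⟨h, h0, h1, h2, h3⟩ := hx
  simp only [firstOddReps, Set.mem_ofPred_eq, Pi.neg_apply, neg_sq]
  exact ⟨h, by lia, by lia, by lia, by lia⟩

theorem hadamard_image_eq {k : ℕ} (hk : Even k) :
    hadamard '' {v | ∑ i, triangular (v i) = k} =
      {x ∈ firstOddReps (2 * k + 1 : ℕ) | (x 0 + x 1 + x 2 + x 3) % 4 = 1} := by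
  ext x
  constructor
  · rintro ⟨v, rfl, rfl⟩
    obtain ⟨s, hs⟩ := (even_sum_triangular_iff v).mp hk
    refine ⟨⟨by rw [hadamard_sq_sum]; push_cast; rfl, ?_⟩, ?_⟩ <;>
      simp only [hadamard, Matrix.cons_val] <;> lia
  · rintro ⟨⟨h, -, h1, h2, h3⟩, hsum⟩
    obtain ⟨v, rfl⟩ := exists_hadamard_eq hsum h1 h2 h3
    rw [hadamard_sq_sum] at h
    exact ⟨v, by simp only [Set.mem_ofPred_eq]; lia, rfl⟩

open Pointwise in
theorem firstOddReps_eq_union_neg (n : ℤ) :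
    firstOddReps n = {x ∈ firstOddReps n | (x 0 + x 1 + x 2 + x 3) % 4 = 1} ∪
      -{x ∈ firstOddReps n | (x 0 + x 1 + x 2 + x 3) % 4 = 1} := by
  ext x
  simp only [Set.mem_union, Set.mem_neg, Set.mem_ofPred_eq, Pi.neg_apply]
  constructor
  · intro hx
    have hneg := neg_mem_firstOddReps hx
    have ⟨_, h0, h1, h2, h3⟩ := hx
    by_cases hsum : (x 0 + x 1 + x 2 + x 3) % 4 = 1
    · exact Or.inl ⟨hx, hsum⟩
    · exact Or.inr ⟨hneg, by lia⟩
  · rintro (hx | hx)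
    · exact hx.1
    · simpa using neg_mem_firstOddReps hx.1

open ArithmeticFunction Pointwise in
theorem ncard_firstOddReps {n : ℕ} (hn : n % 4 = 1) :
    (firstOddReps n).ncard = 2 * sigma 1 n := by
  set H := {x ∈ firstOddReps n | (x 0 + x 1 + x 2 + x 3) % 4 = 1}
  have hcard : H.ncard = sigma 1 n := by
    obtain ⟨k, rfl⟩ : ∃ k, n = 2 * (2 * k) + 1 := ⟨n / 4, by lia⟩
    have himage : hadamard '' {v | ∑ i, triangular (v i) = 2 * k} = H :=
      hadamard_image_eq (even_two_mul k)
    rw [← himage, Set.ncard_image_of_injective _ hadamard_injective, ncard_sum_four_triangular]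
  have hfin : H.Finite := Set.finite_of_ncard_pos (hcard ▸ sigma_pos 1 n (by lia))
  have hdisj : Disjoint H (-H) := by
    refine Set.disjoint_left.mpr fun x hx hx' => ?_
    have h := hx.2
    have h' := hx'.2
    simp only [Pi.neg_apply] at h'
    lia
  rw [firstOddReps_eq_union_neg, Set.ncard_union_eq hdisj hfin hfin.neg, ← Set.image_neg_eq_neg,
    Set.ncard_image_of_injective _ neg_injective, hcard, two_mul]

section Sigma

open ArithmeticFunction

theorem sigma_sq_mul_add_pow_mul_sigma {p : ℕ} (hp : p.Prime) (s m : ℕ) :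
    sigma s (p ^ 2 * m) + p ^ s * sigma s m = (1 + p ^ s) * sigma s (p * m) := by
  rcases eq_or_ne m 0 with rfl | hm
  · simp
  obtain ⟨a, u, hu, rfl⟩ := Nat.exists_eq_pow_mul_and_not_dvd hm p hp.ne_one
  have hsigma (b : ℕ) : sigma s (p ^ b * u) = (∑ j ∈ range (b + 1), p ^ (j * s)) * sigma s u := by
    rw [isMultiplicative_sigma.map_mul_of_coprime ((hp.coprime_iff_not_dvd.mpr hu).pow_left b),
      sigma_apply_prime_pow hp]
  rw [← mul_assoc, ← mul_assoc, ← pow_add, ← pow_succ', hsigma, hsigma, hsigma,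
    add_comm 2 a, sum_range_succ _ (a + 2), sum_range_succ _ (a + 1)]
  ring

theorem sigma_mul_of_not_dvd {p : ℕ} (hp : p.Prime) (s : ℕ) {m : ℕ} (hm : ¬ p ∣ m) :
    sigma s (p * m) = (1 + p ^ s) * sigma s m := by
  rw [isMultiplicative_sigma.map_mul_of_coprime (hp.coprime_iff_not_dvd.mpr hm), sigma_apply,
    hp.sum_divisors, one_pow, add_comm]

theorem sigmaDiv_mul_left {k : ℕ} (hk : k ≠ 0) (m : ℕ) : sigmaDiv (k * m) k = sigma 1 m := by
  rw [sigmaDiv, if_pos (dvd_mul_right k m), Nat.mul_div_cancel_left m hk.pos, sigma_one_apply,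
    Nat.cast_sum]

theorem sigmaDiv_one_right (n : ℕ) : sigmaDiv n 1 = sigma 1 n := by
  simpa using sigmaDiv_mul_left one_ne_zero n

theorem sigmaDiv_of_not_dvd {n k : ℕ} (h : ¬ k ∣ n) : sigmaDiv n k = 0 := if_neg h

theorem sigmaDiv_relation_of_even {n : ℕ} (hn : Even n) :
    sigmaDiv n 1 - 3 * sigmaDiv n 2 + 2 * sigmaDiv n 4 = 0 := by
  obtain ⟨m, rfl⟩ := hn.two_dvd
  rw [sigmaDiv_one_right, sigmaDiv_mul_left two_ne_zero]
  rcases Nat.even_or_odd m with hm | hm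
  · obtain ⟨l, rfl⟩ := hm.two_dvd
    have h := sigma_sq_mul_add_pow_mul_sigma Nat.prime_two 1 l
    rw [show 2 * (2 * l) = 4 * l by ring, sigmaDiv_mul_left four_ne_zero]
    norm_num at h ⊢
    lia
  · rw [sigmaDiv_of_not_dvd (by grind), sigma_mul_of_not_dvd Nat.prime_two 1 (by grind)]
    push_cast
    ring

end Sigma

theorem rep_four_squares_1000_mod2 (n : ℕ) (hn : 0 < n) :
    ({x : Fin 4 → ℤ | x 0 ^ 2 + x 1 ^ 2 + x 2 ^ 2 + x 3 ^ 2 = (n : ℤ) ∧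
        x 0 % 2 = 1 ∧ x 1 % 2 = 0 ∧ x 2 % 2 = 0 ∧ x 3 % 2 = 0}.ncard : ℤ) =
      (1 + chiM4 n) * sigmaDiv n 1 - 3 * sigmaDiv n 2 + 2 * sigmaDiv n 4 := by
  change ((firstOddReps n).ncard : ℤ) = _
  by_cases h1 : n % 4 = 1
  · have hchi : chiM4 n = 1 := if_pos h1
    rw [ncard_firstOddReps h1, hchi, sigmaDiv_one_right, sigmaDiv_of_not_dvd (k := 2) (by lia),
      sigmaDiv_of_not_dvd (k := 4) (by lia)]
    push_cast
    ring
  rw [firstOddReps_eq_empty (by lia), Set.ncard_empty, Nat.cast_zero]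
  rcases Nat.even_or_odd n with heven | hodd
  · have hchi : chiM4 n = 0 := by grind [chiM4]
    rw [hchi, add_zero, one_mul, sigmaDiv_relation_of_even heven]
  · have hchi : chiM4 n = -1 := by grind [chiM4]
    rw [hchi, sigmaDiv_of_not_dvd (k := 2) (by grind), sigmaDiv_of_not_dvd (k := 4) (by grind)]
    ring
end

section
/- For every positive integer n, the number of quadruples (x₁, x₂, x₃, x₄) ∈ ℤ⁴ with x₁² + x₂² + x₃² + x₄² = n and x₁ ≡ x₂ ≡ x₃ ≡ x₄ ≡ 1 (mod 2) equals 16σ(n/4) − 48σ(n/8) + 32σ(n/16). -/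
open Finset

/-!
Let `θ = ∑ q ^ (i ^ 2)` over the odd integers `i`, and let `D = q d/dq`. Then
`θ * D (θ ^ k) = k * D θ * θ ^ k`, and comparing coefficients gives a recurrence which determines
`θ ^ k` from its lowest term `2 ^ k * q ^ k`. For `k = 4` the sums of `d` over the factorizations
`M = 4 * d * e` with `d` and `e` odd satisfy the same recurrence: this is an identity of Liouville
type for the solutions of `i ^ 2 + 4 * d * e = N`, and it follows from three involutions on them.
-/

section Involution

variable {α A : Type*} {s : Finset α} {σ : α → α} {f : α → A}

theorem sum_eq_zero_of_comp_eq_neg [AddCommGroup A] [IsAddTorsionFree A]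
    (hmaps : ∀ a ∈ s, σ a ∈ s) (hinv : ∀ a ∈ s, σ (σ a) = a) (hf : ∀ a ∈ s, f (σ a) = -f a) :
    ∑ a ∈ s, f a = 0 := by
  rw [← self_eq_neg, ← sum_neg_distrib]
  exact sum_nbij' σ σ hmaps hmaps hinv hinv fun a ha => by rw [hf a ha, neg_neg]

theorem sum_eq_sum_filter_add_comp [AddCommMonoid A] (P : α → Prop) [DecidablePred P]
    (hmaps : ∀ a ∈ s, σ a ∈ s) (hinv : ∀ a ∈ s, σ (σ a) = a) (hP : ∀ a ∈ s, P (σ a) ↔ ¬P a) :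
    ∑ a ∈ s, f a = ∑ a ∈ s with P a, (f a + f (σ a)) := by
  rw [← sum_filter_add_sum_filter_not s P, sum_add_distrib]
  congr 1
  refine sum_nbij' σ σ ?_ ?_ ?_ ?_ ?_ <;> simp only [mem_filter, and_imp]
  · exact fun a ha hPa => ⟨hmaps a ha, (hP a ha).2 hPa⟩
  · exact fun a ha hPa => ⟨hmaps a ha, fun h => (hP a ha).1 h hPa⟩
  · exact fun a ha _ => hinv a ha
  · exact fun a ha _ => hinv a ha
  · exact fun a ha _ => by rw [hinv a ha]

end Involution

/-- The odd integers in `[-N, N]`. They include all odd `i` with `i ^ 2 ≤ N`, so that this is a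
sufficient range for the odd variables of every equation below. -/
noncomputable def oddIcc (N : ℤ) : Finset ℤ := {i ∈ Icc (-N) N | Odd i}

/-- The representations of `N` as an ordered sum of `k` odd squares. -/
noncomputable def oddReps (k : ℕ) (N : ℤ) : Finset (Fin k → ℤ) :=
  {x ∈ Fintype.piFinset fun _ => oddIcc N | ∑ i, x i ^ 2 = N}

/-- The factorizations `M = 4 * d * e` with `d` and `e` odd and positive, as pairs `(d, e)`. -/
noncomputable def oddFactorizations (M : ℤ) : Finset (ℤ × ℤ) :=
  {p ∈ oddIcc M ×ˢ oddIcc M | (0 < p.1 ∧ 0 < p.2) ∧ 4 * p.1 * p.2 = M}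

/-- The sum of `d` over the factorizations `M = 4 * d * e` with `d` and `e` odd and positive; it is
`σ(M / 4)` when `M / 4` is an odd integer, and `0` otherwise. -/
noncomputable def oddFactorSum (M : ℤ) : ℤ := ∑ p ∈ oddFactorizations M, p.1

/-- The solutions `(i, d, e)` of `i ^ 2 + 4 * d * e = N` in odd integers with `d` and `e`
positive. -/
noncomputable def oddTriples (N : ℤ) : Finset (ℤ × ℤ × ℤ) :=
  {p ∈ oddIcc N ×ˢ oddIcc N ×ˢ oddIcc N |
    (0 < p.2.1 ∧ 0 < p.2.2) ∧ p.1 ^ 2 + 4 * p.2.1 * p.2.2 = N}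

section Membership

variable {i M N : ℤ}

theorem mem_oddIcc : i ∈ oddIcc N ↔ (-N ≤ i ∧ i ≤ N) ∧ Odd i := by
  rw [oddIcc, mem_filter, mem_Icc]

theorem mem_oddIcc_of_sq_le (hi : Odd i) (h : i ^ 2 ≤ N) : i ∈ oddIcc N :=
  mem_oddIcc.2 ⟨⟨by nlinarith [sq_nonneg (i + 1)], by nlinarith [sq_nonneg (i - 1)]⟩, hi⟩

theorem mem_oddReps {k : ℕ} {x : Fin k → ℤ} :
    x ∈ oddReps k N ↔ (∀ i, Odd (x i)) ∧ ∑ i, x i ^ 2 = N := by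
  simp only [oddReps, mem_filter, Fintype.mem_piFinset, and_congr_left_iff]
  rintro rfl
  refine forall_congr' fun i => ⟨fun hi => (mem_oddIcc.1 hi).2, fun hi => ?_⟩
  exact mem_oddIcc_of_sq_le hi
    (single_le_sum (f := fun j => x j ^ 2) (fun j _ => sq_nonneg _) (mem_univ i))

theorem mem_oddFactorizations {p : ℤ × ℤ} :
    p ∈ oddFactorizations M ↔
      (Odd p.1 ∧ Odd p.2) ∧ (0 < p.1 ∧ 0 < p.2) ∧ 4 * p.1 * p.2 = M := by
  simp only [oddFactorizations, mem_filter, mem_product, mem_oddIcc, and_congr_left_iff]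
  rintro ⟨⟨hd, he⟩, rfl⟩
  have hdM : p.1 ≤ 4 * p.1 * p.2 := by nlinarith
  have heM : p.2 ≤ 4 * p.1 * p.2 := by nlinarith
  exact ⟨fun h => ⟨h.1.2, h.2.2⟩,
    fun h => ⟨⟨⟨by linarith, hdM⟩, h.1⟩, ⟨by linarith, heM⟩, h.2⟩⟩

theorem mem_oddTriples {p : ℤ × ℤ × ℤ} :
    p ∈ oddTriples N ↔
      Odd p.1 ∧ (Odd p.2.1 ∧ Odd p.2.2) ∧ (0 < p.2.1 ∧ 0 < p.2.2) ∧
        p.1 ^ 2 + 4 * p.2.1 * p.2.2 = N := by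
  obtain ⟨i, d, e⟩ := p
  simp only [oddTriples, mem_filter, mem_product]
  constructor
  · rintro ⟨⟨hi, hd, he⟩, h⟩
    exact ⟨(mem_oddIcc.1 hi).2, ⟨(mem_oddIcc.1 hd).2, (mem_oddIcc.1 he).2⟩, h⟩
  · rintro ⟨hi, ⟨hd, he⟩, ⟨hd0, he0⟩, h⟩
    have hiN : i ^ 2 ≤ N := by nlinarith
    have hdN : d ≤ N := by nlinarith
    have heN : e ≤ N := by nlinarith
    exact ⟨⟨mem_oddIcc_of_sq_le hi hiN, mem_oddIcc.2 ⟨⟨by linarith, hdN⟩, hd⟩,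
      mem_oddIcc.2 ⟨⟨by linarith, heN⟩, he⟩⟩, ⟨hd0, he0⟩, h⟩

theorem mem_oddTriples_iff_mem_oddFactorizations {p : ℤ × ℤ × ℤ} :
    p ∈ oddTriples N ↔ p.1 ∈ oddIcc N ∧ p.2 ∈ oddFactorizations (N - p.1 ^ 2) := by
  rw [mem_oddTriples, mem_oddFactorizations, eq_sub_iff_add_eq']
  refine ⟨fun ⟨hi, hp⟩ => ⟨mem_oddIcc_of_sq_le hi ?_, hp⟩, fun h => ⟨(mem_oddIcc.1 h.1).2, h.2⟩⟩
  nlinarith [mul_pos hp.2.1.1 hp.2.1.2]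

end Membership

theorem sum_oddReps_succ {A : Type*} [AddCommMonoid A] (k : ℕ) (N : ℤ)
    (f : (Fin (k + 1) → ℤ) → A) :
    ∑ x ∈ oddReps (k + 1) N, f x =
      ∑ i ∈ oddIcc N, ∑ y ∈ oddReps k (N - i ^ 2), f (Fin.cons i y) := by
  let e := Fin.consEquiv fun _ : Fin (k + 1) => ℤ
  rw [← sum_finset_product ((oddReps (k + 1) N).map e.symm.toEmbedding)
    (f := fun p => f (Fin.cons p.1 p.2))]
  · simp [e, sum_map]
  · rintro ⟨i, y⟩
    have hsq : 0 ≤ ∑ j, y j ^ 2 := sum_nonneg fun j _ => sq_nonneg _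
    simp only [e, mem_map_equiv, Equiv.symm_symm, Fin.consEquiv_apply, mem_oddReps,
      Fin.sum_univ_succ, Fin.forall_fin_succ, Fin.cons_zero, Fin.cons_succ, eq_sub_iff_add_eq']
    exact ⟨fun ⟨⟨hi, hy⟩, hN⟩ => ⟨mem_oddIcc_of_sq_le hi (by linarith), hy, hN⟩,
      fun ⟨hi, hy, hN⟩ => ⟨⟨(mem_oddIcc.1 hi).2, hy⟩, hN⟩⟩

theorem sum_oddReps_sq_eq {k : ℕ} (N : ℤ) (i j : Fin k) :
    ∑ x ∈ oddReps k N, x i ^ 2 = ∑ x ∈ oddReps k N, x j ^ 2 := by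
  let e : (Fin k → ℤ) ≃ (Fin k → ℤ) := (Equiv.swap i j).arrowCongr (Equiv.refl ℤ)
  refine sum_equiv e (fun x => ?_) fun x _ => by simp [e]
  simp only [e, mem_oddReps, Equiv.arrowCongr_apply, Equiv.coe_refl, Function.comp_apply, id,
    Equiv.symm_swap, Equiv.sum_comp (Equiv.swap i j) fun l => x l ^ 2,
    (Equiv.swap i j).forall_congr_right (q := fun l => Odd (x l))]

theorem sum_mul_card_oddReps_eq_zero (k : ℕ) (N : ℤ) :
    ∑ i ∈ oddIcc N, (N - (k + 1) * i ^ 2) * (#(oddReps k (N - i ^ 2)) : ℤ) = 0 := by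
  calc ∑ i ∈ oddIcc N, (N - (k + 1) * i ^ 2) * (#(oddReps k (N - i ^ 2)) : ℤ)
      = ∑ x ∈ oddReps (k + 1) N, (N - (k + 1) * x 0 ^ 2) := by
        simp only [sum_oddReps_succ, Fin.cons_zero, sum_const, nsmul_eq_mul, mul_comm]
    _ = ∑ _x ∈ oddReps (k + 1) N, N - ∑ j : Fin (k + 1), ∑ x ∈ oddReps (k + 1) N, x j ^ 2 := by
        rw [sum_sub_distrib, ← mul_sum, sum_congr rfl fun j _ => sum_oddReps_sq_eq N j 0]
        simp
    _ = 0 := by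
        rw [sum_comm, ← sum_sub_distrib]
        exact sum_eq_zero fun x hx => sub_eq_zero.2 (mem_oddReps.1 hx).2.symm

theorem one_le_sq_of_odd {x : ℤ} (hx : Odd x) : 1 ≤ x ^ 2 := by
  have hx0 : x ≠ 0 := by grind
  exact Int.add_one_le_of_lt (sq_pos_of_ne_zero hx0)

theorem eq_zero_of_sum_oddIcc_eq_zero {k : ℕ} {h : ℤ → ℤ} (hle : ∀ M ≤ (k : ℤ), h M = 0)
    (hrec : ∀ N, ∑ i ∈ oddIcc N, (N - (k + 1) * i ^ 2) * h (N - i ^ 2) = 0) (M : ℤ) :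
    h M = 0 := by
  induction M using Int.strongRec (m := k) with
  | lt M hM => exact hle M hM.le
  | ge M hM ih =>
    obtain rfl | hkM := hM.eq_or_lt
    · exact hle _ le_rfl
    have hsub : ({1, -1} : Finset ℤ) ⊆ oddIcc (M + 1) :=
      fun i hi => mem_oddIcc_of_sq_le (by grind) (by grind)
    have hvanish : ∀ i ∈ oddIcc (M + 1), i ∉ ({1, -1} : Finset ℤ) →
        (M + 1 - (k + 1) * i ^ 2) * h (M + 1 - i ^ 2) = 0 := by
      intro i hi hi'
      have hodd := (mem_oddIcc.1 hi).2
      simp only [mem_insert, mem_singleton, ← sq_eq_one_iff] at hi'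
      have hsq : 1 < i ^ 2 := (one_le_sq_of_odd hodd).lt_of_ne' hi'
      rw [ih _ (by linarith), mul_zero]
    have htwo : 2 * ((M - k) * h M) = 0 := by
      have hsum := hrec (M + 1)
      rw [← sum_subset hsub hvanish, sum_pair (by norm_num)] at hsum
      simp only [neg_one_sq, one_pow, add_sub_cancel_right] at hsum
      linear_combination hsum
    simpa [sub_ne_zero.2 hkM.ne'] using htwo

theorem le_of_mem_oddReps {k : ℕ} {N : ℤ} {x : Fin k → ℤ} (hx : x ∈ oddReps k N) :
    (k : ℤ) ≤ N := by
  obtain ⟨hodd, rfl⟩ := mem_oddReps.1 hx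
  simpa using card_nsmul_le_sum univ (fun i => x i ^ 2) 1 fun i _ => one_le_sq_of_odd (hodd i)

theorem oddReps_self (k : ℕ) : oddReps k k = Fintype.piFinset fun _ => {1, -1} := by
  ext x
  simp only [mem_oddReps, Fintype.mem_piFinset, mem_insert, mem_singleton, ← sq_eq_one_iff]
  constructor
  · rintro ⟨hodd, h⟩ i
    have hsum : ∑ _i : Fin k, (1 : ℤ) = ∑ i, x i ^ 2 := by simp [h]
    rw [sum_eq_sum_iff_of_le fun i _ => one_le_sq_of_odd (hodd i)] at hsum
    exact (hsum i (mem_univ i)).symm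
  · intro h
    exact ⟨fun i => by rcases sq_eq_one_iff.1 (h i) with hi | hi <;> simp [hi], by simp [h]⟩

theorem card_oddReps_eq_two_pow_mul {k : ℕ} {f : ℤ → ℤ} (hlt : ∀ M < (k : ℤ), f M = 0)
    (hself : f k = 1)
    (hrec : ∀ N, ∑ i ∈ oddIcc N, (N - (k + 1) * i ^ 2) * f (N - i ^ 2) = 0) (M : ℤ) :
    (#(oddReps k M) : ℤ) = 2 ^ k * f M := by
  refine sub_eq_zero.1 (eq_zero_of_sum_oddIcc_eq_zero (k := k)
    (h := fun M => (#(oddReps k M) : ℤ) - 2 ^ k * f M) (fun M hM => ?_) (fun N => ?_) M)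
  · obtain rfl | hM := hM.eq_or_lt
    · simp [oddReps_self, hself]
    · have hempty : oddReps k M = ∅ :=
        eq_empty_of_forall_notMem fun x hx => hM.not_ge (le_of_mem_oddReps hx)
      simp [hempty, hlt M hM]
  · simp only [mul_sub, sum_sub_distrib, sum_mul_card_oddReps_eq_zero,
      mul_left_comm _ ((2 : ℤ) ^ k), ← mul_sum, hrec, mul_zero, sub_zero]

section Liouville

variable (N : ℤ)

theorem sum_oddTriples_mul_sq_eq_zero : ∑ p ∈ oddTriples N, p.1 * p.2.1 ^ 2 = 0 := by
  refine sum_eq_zero_of_comp_eq_neg (σ := fun p => (-p.1, p.2)) ?_ ?_ ?_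
  · simp only [mem_oddTriples, even_two.neg_pow]
    grind
  · simp
  · simp

theorem sum_oddTriples_filter_mul_mul_eq_zero :
    ∑ p ∈ oddTriples N with p.1 + p.2.1 < p.2.2,
      (p.2.1 + p.2.2) * (p.2.2 - p.1) * (p.2.1 + p.1) = 0 := by
  refine sum_eq_zero_of_comp_eq_neg
    (σ := fun p => (-p.1 - 2 * p.2.1, p.2.1, p.2.2 - p.1 - p.2.1)) ?_ ?_ ?_
  · -- The involution exchanges the conditions `i + d < e` and `0 < e`.
    simp only [mem_filter, mem_oddTriples]
    grind
  · rintro ⟨i, d, e⟩ -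
    ext <;> ring
  · rintro ⟨i, d, e⟩ -
    ring

theorem sum_oddTriples_mul_sub_eq_zero :
    ∑ p ∈ oddTriples N, p.2.1 * (p.2.1 * p.2.2 - p.1 ^ 2) = 0 := by
  -- The vanishing sum is subtracted so that the summand, once symmetrized, becomes a product.
  calc ∑ p ∈ oddTriples N, p.2.1 * (p.2.1 * p.2.2 - p.1 ^ 2)
      = ∑ p ∈ oddTriples N, (p.2.1 * (p.2.1 * p.2.2 - p.1 ^ 2) - p.1 * p.2.1 ^ 2) := by
        rw [sum_sub_distrib, sum_oddTriples_mul_sq_eq_zero, sub_zero]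
    _ = ∑ p ∈ oddTriples N with p.1 + p.2.1 < p.2.2,
          (p.2.1 + p.2.2) * (p.2.2 - p.1) * (p.2.1 + p.1) := by
        rw [sum_eq_sum_filter_add_comp (σ := fun p => (-p.1, p.2.2, p.2.1))
          fun p : ℤ × ℤ × ℤ => p.1 + p.2.1 < p.2.2]
        · exact sum_congr rfl fun p _ => by ring
        · simp only [mem_oddTriples]
          grind
        · simp
        · -- Since `i + d` is even and `e` is odd, they are never equal.
          simp only [mem_oddTriples]
          grind
    _ = 0 := sum_oddTriples_filter_mul_mul_eq_zero N

theorem sum_mul_oddFactorSum_eq_zero :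
    ∑ i ∈ oddIcc N, (N - 5 * i ^ 2) * oddFactorSum (N - i ^ 2) = 0 := by
  calc ∑ i ∈ oddIcc N, (N - 5 * i ^ 2) * oddFactorSum (N - i ^ 2)
      = ∑ p ∈ oddTriples N, (N - 5 * p.1 ^ 2) * p.2.1 := by
        rw [sum_finset_product (oddTriples N) (oddIcc N) (fun i => oddFactorizations (N - i ^ 2))
          fun _ => mem_oddTriples_iff_mem_oddFactorizations]
        simp only [oddFactorSum, mul_sum]
    _ = ∑ p ∈ oddTriples N, 4 * (p.2.1 * (p.2.1 * p.2.2 - p.1 ^ 2)) := by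
        refine sum_congr rfl fun p hp => ?_
        linear_combination -p.2.1 * (mem_oddTriples.1 hp).2.2.2
    _ = 0 := by rw [← mul_sum, sum_oddTriples_mul_sub_eq_zero, mul_zero]

end Liouville

theorem oddFactorSum_eq_zero_of_lt {M : ℤ} (hM : M < 4) : oddFactorSum M = 0 := by
  refine sum_eq_zero fun p hp => ?_
  obtain ⟨-, ⟨hd, he⟩, h⟩ := mem_oddFactorizations.1 hp
  nlinarith [mul_pos hd he]

theorem oddFactorSum_eq_zero_of_emod_ne {M : ℤ} (hM : M % 8 ≠ 4) : oddFactorSum M = 0 := by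
  refine sum_eq_zero fun p hp => absurd ?_ hM
  obtain ⟨⟨hd, he⟩, -, h⟩ := mem_oddFactorizations.1 hp
  have hde : Odd (p.1 * p.2) := hd.mul he
  grind

theorem oddFactorSum_four_mul {m : ℕ} (hm : Odd m) :
    oddFactorSum (4 * m) = ∑ d ∈ m.divisors, (d : ℤ) := by
  rw [← Nat.sum_divisorsAntidiagonal fun d _ => (d : ℤ), oddFactorSum]
  refine sum_nbij' (fun p => (p.1.toNat, p.2.toNat)) (fun p => (p.1, p.2)) ?_ ?_ ?_ ?_ ?_
  · rintro ⟨d, e⟩ hp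
    obtain ⟨-, ⟨hd, he⟩, h⟩ := mem_oddFactorizations.1 hp
    lift d to ℕ using hd.le
    lift e to ℕ using he.le
    simp only [Int.toNat_natCast, Nat.mem_divisorsAntidiagonal]
    exact ⟨by zify; linarith, hm.pos.ne'⟩
  · rintro ⟨d, e⟩ hp
    obtain ⟨rfl, -⟩ := Nat.mem_divisorsAntidiagonal.1 hp
    obtain ⟨hd, he⟩ := Nat.odd_mul.1 hm
    refine mem_oddFactorizations.2 ⟨⟨hd.natCast, he.natCast⟩,
      ⟨Int.natCast_pos.2 hd.pos, Int.natCast_pos.2 he.pos⟩, ?_⟩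
    push_cast
    ring
  · rintro ⟨d, e⟩ hp
    obtain ⟨-, ⟨hd, he⟩, -⟩ := mem_oddFactorizations.1 hp
    simp only [Int.toNat_of_nonneg hd.le, Int.toNat_of_nonneg he.le]
  · simp
  · rintro ⟨d, e⟩ hp
    exact (Int.toNat_of_nonneg (mem_oddFactorizations.1 hp).2.1.1.le).symm

theorem card_oddReps_four (M : ℤ) : (#(oddReps 4 M) : ℤ) = 16 * oddFactorSum M := by
  refine card_oddReps_eq_two_pow_mul (fun M => oddFactorSum_eq_zero_of_lt) ?_ (fun N => ?_) M
  · simpa using oddFactorSum_four_mul odd_one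
  · convert sum_mul_oddFactorSum_eq_zero N
    norm_num

theorem sum_divisors_two_pow (a : ℕ) : ∑ d ∈ (2 ^ a : ℕ).divisors, (d : ℤ) = 2 ^ (a + 1) - 1 := by
  rw [Nat.sum_divisors_prime_pow Nat.prime_two, ← geom_sum_mul]
  norm_num

/-- The truncated subtraction gives the value `0` for `a < b`. -/
theorem sigmaDiv_two_pow_mul {k : ℕ} (hk : Odd k) (a b : ℕ) :
    sigmaDiv (2 ^ a * k) (2 ^ b) = (2 ^ (a + 1 - b) - 1) * ∑ d ∈ k.divisors, (d : ℤ) := by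
  have hcop (c : ℕ) : Nat.Coprime (2 ^ c) k := (Nat.coprime_two_left.2 hk).pow_left c
  rw [sigmaDiv]
  obtain hba | hab := le_or_gt b a
  · obtain ⟨c, rfl⟩ := Nat.exists_eq_add_of_le hba
    rw [pow_add, mul_assoc, if_pos (dvd_mul_right _ _), Nat.mul_div_cancel_left _ (by positivity),
      ← Nat.cast_sum, (hcop c).sum_divisors_mul]
    push_cast
    rw [sum_divisors_two_pow, show b + c + 1 - b = c + 1 by omega]
  · have hndvd : ¬2 ^ b ∣ 2 ^ a * k := by
      rw [(hcop b).dvd_mul_right, Nat.pow_dvd_pow_iff_le_right one_lt_two]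
      exact hab.not_ge
    rw [if_neg hndvd, Nat.sub_eq_zero_of_le hab, pow_zero, sub_self, zero_mul]

theorem oddFactorSum_eq_sigmaDiv {n : ℕ} (hn : n ≠ 0) :
    oddFactorSum n = sigmaDiv n 4 - 3 * sigmaDiv n 8 + 2 * sigmaDiv n 16 := by
  obtain ⟨a, k, hk, rfl⟩ := Nat.exists_eq_two_pow_mul_odd hn
  have h4 : sigmaDiv (2 ^ a * k) 4 = _ := sigmaDiv_two_pow_mul hk a 2
  have h8 : sigmaDiv (2 ^ a * k) 8 = _ := sigmaDiv_two_pow_mul hk a 3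
  have h16 : sigmaDiv (2 ^ a * k) 16 = _ := sigmaDiv_two_pow_mul hk a 4
  rw [h4, h8, h16]
  match a with
  | 0 | 1 =>
    rw [oddFactorSum_eq_zero_of_emod_ne (by grind)]
    simp
  | 2 => simpa using oddFactorSum_four_mul hk
  | a + 3 =>
    have hmul_eight : (2 ^ (a + 3) * k : ℕ) = 8 * (2 ^ a * k : ℤ) := by
      push_cast
      ring
    rw [oddFactorSum_eq_zero_of_emod_ne (by omega)]
    simp only [Nat.reduceSubDiff]
    ring

theorem rep_four_squares_all_odd (n : ℕ) (hn : 0 < n) :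
    ({x : Fin 4 → ℤ | x 0 ^ 2 + x 1 ^ 2 + x 2 ^ 2 + x 3 ^ 2 = (n : ℤ) ∧
        x 0 % 2 = 1 ∧ x 1 % 2 = 1 ∧ x 2 % 2 = 1 ∧ x 3 % 2 = 1}.ncard : ℤ) =
      16 * sigmaDiv n 4 - 48 * sigmaDiv n 8 + 32 * sigmaDiv n 16 := by
  have hset : {x : Fin 4 → ℤ | x 0 ^ 2 + x 1 ^ 2 + x 2 ^ 2 + x 3 ^ 2 = (n : ℤ) ∧
      x 0 % 2 = 1 ∧ x 1 % 2 = 1 ∧ x 2 % 2 = 1 ∧ x 3 % 2 = 1} =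
        (oddReps 4 n : Set (Fin 4 → ℤ)) := by
    ext x
    simp [mem_oddReps, Fin.sum_univ_four, Fin.forall_fin_succ, Int.odd_iff, and_comm]
  rw [hset, Set.ncard_coe_finset, card_oddReps_four, oddFactorSum_eq_sigmaDiv hn.ne']
  ring
end
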